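/- Let Γ : ℝ² → ℝ be smooth and suppose (u1, u2, v1, v2) satisfies the combined system: ∂ₜm1 + ∂ₓ(Γ m1) + n2(g1 g2 − Γ) + m1(f2 g2 + 2 f1 g1) = 0, ∂ₜm2 + ∂ₓ(Γ m2) − n1(g1 g2 − Γ) − m2(f1 g1 + 2 f2 g2) = 0, ∂ₜn1 + ∂ₓ(Γ n1) − m2(f1 f2 − Γ) − n1(f2 g2 + 2 f1 g1) = 0, ∂ₜn2 + ∂ₓ(Γ n2) + m1(f1 f2 − Γ) + n2(f1 g1 + 2 f2 g2) = 0. Then P = m1 n1 + m2 n2 satisfies ∂ₜP + Γ ∂ₓP + 2 (∂ₓΓ) P = 0 identically on ℝ². -/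

import Mathlib

/-- Partial derivative with respect to the first (space) variable. -/
noncomputable def pX (f : ℝ × ℝ → ℝ) : ℝ × ℝ → ℝ :=
  fun p => deriv (fun x => f (x, p.2)) p.1

/-- Partial derivative with respect to the second (time) variable. -/
noncomputable def pT (f : ℝ × ℝ → ℝ) : ℝ × ℝ → ℝ :=
  fun p => deriv (fun t => f (p.1, t)) p.2

/-!
The momenta `m₁, m₂, n₁, n₂` are densities of weight one, sourced by the nonlinear terms of the
system, for the flow of `∂ₜ + Γ ∂ₓ`: the operator `f ↦ ∂ₜf + ∂ₓ(Γ f)` is the member `k = 1` of the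
family `f ↦ ∂ₜf + Γ ∂ₓf + k (∂ₓΓ) f`. Weights add under products, so `P` has weight two, and its
source is the sum of the four sources, each paired with the conjugate momentum; this sum vanishes
identically.
-/

section PartialDerivatives

variable {f g : ℝ × ℝ → ℝ} {p : ℝ × ℝ}

theorem pX_eq_fderiv (hf : DifferentiableAt ℝ f p) : pX f p = fderiv ℝ f p (1, 0) :=
  (hf.hasFDerivAt.comp_hasDerivAt p.1
    ((hasDerivAt_id p.1).prodMk (hasDerivAt_const p.1 p.2))).deriv

theorem pT_eq_fderiv (hf : DifferentiableAt ℝ f p) : pT f p = fderiv ℝ f p (0, 1) :=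
  (hf.hasFDerivAt.comp_hasDerivAt p.2
    ((hasDerivAt_const p.2 p.1).prodMk (hasDerivAt_id p.2))).deriv

theorem pX_mul (hf : DifferentiableAt ℝ f p) (hg : DifferentiableAt ℝ g p) :
    pX (fun q => f q * g q) p = f p * pX g p + pX f p * g p := by
  rw [pX_eq_fderiv (hf.fun_mul hg), pX_eq_fderiv hf, pX_eq_fderiv hg, fderiv_fun_mul hf hg]
  simp [mul_comm]

theorem contDiff_pX {k n : WithTop ℕ∞} (hf : ContDiff ℝ n f) (hkn : k + 1 ≤ n) :
    ContDiff ℝ k (pX f) := by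
  have hdiff : Differentiable ℝ f :=
    (hf.of_le (le_add_self.trans hkn)).differentiable one_ne_zero
  have hpX : pX f = fun p => fderiv ℝ f p (1, 0) := funext fun p => pX_eq_fderiv (hdiff p)
  exact hpX ▸ (hf.fderiv_right hkn).clm_apply contDiff_const

theorem differentiable_sub_pX_pX (hf : ContDiff ℝ 3 f) :
    Differentiable ℝ fun p => f p - pX (pX f) p := by
  have hpX : ContDiff ℝ 2 (pX f) := contDiff_pX hf (by norm_num)
  have hpXX : ContDiff ℝ 1 (pX (pX f)) := contDiff_pX hpX (by norm_num)
  exact (hf.differentiable (by norm_num)).sub (hpXX.differentiable one_ne_zero)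

end PartialDerivatives

section DensityTransport

variable {f g Γ : ℝ × ℝ → ℝ} {p : ℝ × ℝ}

/-- The Lie derivative along `∂ₜ + Γ ∂ₓ` of a density `f (dx)ᵏ` of weight `k`, identified with
its coefficient `f`. Its kernel consists of the densities carried along by the flow. -/
noncomputable def densityTransport (Γ : ℝ × ℝ → ℝ) (k : ℝ) (f : ℝ × ℝ → ℝ) : ℝ × ℝ → ℝ :=
  fun p => pT f p + Γ p * pX f p + k * pX Γ p * f p

theorem densityTransport_eq_fderiv (k : ℝ) (hf : DifferentiableAt ℝ f p) :
    densityTransport Γ k f p = fderiv ℝ f p (Γ p, 1) + k * pX Γ p * f p := by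
  have hdir : ((Γ p, 1) : ℝ × ℝ) = (0, 1) + Γ p • (1, 0) := by simp
  rw [densityTransport, pT_eq_fderiv hf, pX_eq_fderiv hf, hdir, map_add, map_smul, smul_eq_mul]

theorem densityTransport_one (hΓ : DifferentiableAt ℝ Γ p) (hf : DifferentiableAt ℝ f p) :
    densityTransport Γ 1 f p = pT f p + pX (fun q => Γ q * f q) p := by
  rw [densityTransport, pX_mul hΓ hf]
  ring

theorem densityTransport_add (k : ℝ) (hf : DifferentiableAt ℝ f p) (hg : DifferentiableAt ℝ g p) :
    densityTransport Γ k (fun q => f q + g q) p =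
      densityTransport Γ k f p + densityTransport Γ k g p := by
  rw [densityTransport_eq_fderiv k (hf.fun_add hg), densityTransport_eq_fderiv k hf,
    densityTransport_eq_fderiv k hg, fderiv_fun_add hf hg, add_apply]
  ring

theorem densityTransport_mul (j k : ℝ) (hf : DifferentiableAt ℝ f p)
    (hg : DifferentiableAt ℝ g p) :
    densityTransport Γ (j + k) (fun q => f q * g q) p =
      densityTransport Γ j f p * g p + f p * densityTransport Γ k g p := by
  rw [densityTransport_eq_fderiv _ (hf.fun_mul hg), densityTransport_eq_fderiv j hf,
    densityTransport_eq_fderiv k hg, fderiv_fun_mul hf hg]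
  simp only [add_apply, smul_apply, smul_eq_mul]
  ring

theorem densityTransport_two_mul_add_mul {m1 m2 n1 n2 : ℝ × ℝ → ℝ}
    (hm1 : DifferentiableAt ℝ m1 p) (hm2 : DifferentiableAt ℝ m2 p)
    (hn1 : DifferentiableAt ℝ n1 p) (hn2 : DifferentiableAt ℝ n2 p) :
    densityTransport Γ 2 (fun q => m1 q * n1 q + m2 q * n2 q) p =
      densityTransport Γ 1 m1 p * n1 p + m1 p * densityTransport Γ 1 n1 p +
        (densityTransport Γ 1 m2 p * n2 p + m2 p * densityTransport Γ 1 n2 p) := by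
  rw [densityTransport_add 2 (hm1.fun_mul hn1) (hm2.fun_mul hn2), ← one_add_one_eq_two,
    densityTransport_mul 1 1 hm1 hn1, densityTransport_mul 1 1 hm2 hn2]

end DensityTransport

theorem stmt_7_general
    (m1 m2 n1 n2 f1 f2 g1 g2 Γ : ℝ × ℝ → ℝ)
    (hm1 : Differentiable ℝ m1) (hm2 : Differentiable ℝ m2)
    (hn1 : Differentiable ℝ n1) (hn2 : Differentiable ℝ n2)
    (hΓ : Differentiable ℝ Γ)
    (hsys : ∀ p : ℝ × ℝ,
        pT m1 p + pX (fun q => Γ q * m1 q) p + n2 p * (g1 p * g2 p - Γ p)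
          + m1 p * (f2 p * g2 p + 2 * f1 p * g1 p) = 0 ∧
        pT m2 p + pX (fun q => Γ q * m2 q) p - n1 p * (g1 p * g2 p - Γ p)
          - m2 p * (f1 p * g1 p + 2 * f2 p * g2 p) = 0 ∧
        pT n1 p + pX (fun q => Γ q * n1 q) p - m2 p * (f1 p * f2 p - Γ p)
          - n1 p * (f2 p * g2 p + 2 * f1 p * g1 p) = 0 ∧
        pT n2 p + pX (fun q => Γ q * n2 q) p + m1 p * (f1 p * f2 p - Γ p)
          + n2 p * (f1 p * g1 p + 2 * f2 p * g2 p) = 0)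
    (P : ℝ × ℝ → ℝ)
    (hP : P = fun q => m1 q * n1 q + m2 q * n2 q) :
    ∀ p : ℝ × ℝ, pT P p + Γ p * pX P p + 2 * pX Γ p * P p = 0 := by
  intro p
  obtain ⟨eq_m1, eq_m2, eq_n1, eq_n2⟩ := hsys p
  rw [← densityTransport_one (hΓ p) (hm1 p)] at eq_m1
  rw [← densityTransport_one (hΓ p) (hm2 p)] at eq_m2
  rw [← densityTransport_one (hΓ p) (hn1 p)] at eq_n1
  rw [← densityTransport_one (hΓ p) (hn2 p)] at eq_n2
  change densityTransport Γ 2 P p = 0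
  rw [hP, densityTransport_two_mul_add_mul (hm1 p) (hm2 p) (hn1 p) (hn2 p)]
  linear_combination n1 p * eq_m1 + n2 p * eq_m2 + m1 p * eq_n1 + m2 p * eq_n2

theorem stmt_7
    (u1 u2 v1 v2 Γ : ℝ × ℝ → ℝ)
    (hu1 : ContDiff ℝ (⊤ : ℕ∞) u1) (hu2 : ContDiff ℝ (⊤ : ℕ∞) u2)
    (hv1 : ContDiff ℝ (⊤ : ℕ∞) v1) (hv2 : ContDiff ℝ (⊤ : ℕ∞) v2)
    (hΓ : ContDiff ℝ (⊤ : ℕ∞) Γ)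
    (m1 m2 n1 n2 f1 f2 g1 g2 : ℝ × ℝ → ℝ)
    (hm1 : m1 = fun p => u1 p - pX (pX u1) p)
    (hm2 : m2 = fun p => u2 p - pX (pX u2) p)
    (hn1 : n1 = fun p => v1 p - pX (pX v1) p)
    (hn2 : n2 = fun p => v2 p - pX (pX v2) p)
    (hf1 : f1 = fun p => u2 p - pX v1 p)
    (hf2 : f2 = fun p => u1 p + pX v2 p)
    (hg1 : g1 = fun p => v2 p + pX u1 p)
    (hg2 : g2 = fun p => v1 p - pX u2 p)
    (hsys : ∀ p : ℝ × ℝ,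
        pT m1 p + pX (fun q => Γ q * m1 q) p + n2 p * (g1 p * g2 p - Γ p)
          + m1 p * (f2 p * g2 p + 2 * f1 p * g1 p) = 0 ∧
        pT m2 p + pX (fun q => Γ q * m2 q) p - n1 p * (g1 p * g2 p - Γ p)
          - m2 p * (f1 p * g1 p + 2 * f2 p * g2 p) = 0 ∧
        pT n1 p + pX (fun q => Γ q * n1 q) p - m2 p * (f1 p * f2 p - Γ p)
          - n1 p * (f2 p * g2 p + 2 * f1 p * g1 p) = 0 ∧
        pT n2 p + pX (fun q => Γ q * n2 q) p + m1 p * (f1 p * f2 p - Γ p)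
          + n2 p * (f1 p * g1 p + 2 * f2 p * g2 p) = 0)
    (P : ℝ × ℝ → ℝ)
    (hP : P = fun q => m1 q * n1 q + m2 q * n2 q) :
    ∀ p : ℝ × ℝ, pT P p + Γ p * pX P p + 2 * pX Γ p * P p = 0 := by
  have momentum {w : ℝ × ℝ → ℝ} (hw : ContDiff ℝ (⊤ : ℕ∞) w) :
      Differentiable ℝ fun p => w p - pX (pX w) p :=
    differentiable_sub_pX_pX (contDiff_infty.1 hw 3)
  exact stmt_7_general m1 m2 n1 n2 f1 f2 g1 g2 Γ (hm1 ▸ momentum hu1) (hm2 ▸ momentum hu2)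
    (hn1 ▸ momentum hv1) (hn2 ▸ momentum hv2) (hΓ.differentiable (by simp)) hsys P hP
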